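/- arXiv:0805.0826 — 2 statements merged into one kernel-verified Lean document; each statement's English description precedes it below -/
import Mathlib

section
/- (Existence of the separatrix.) Let s > 0, let P satisfy H1 and H2, fix x₀ > 0, and suppose ∫_{x₀}^∞ P(z)·z^{−1−2/s} dz < ∞. Then there exists a threshold value γ* with γ* > γ_c(x₀) such that for every γ₀ > 0: a positive solution of the Dyson–Schwinger ODE on [x₀, ∞) with initial value γ₀ at x₀ exists if and only if γ₀ ≥ γ*. The global solution with initial value γ* is called the separatrix. -/
open Real MeasureTheory Filter Set

noncomputable section

/-- `γ` is a positive solution of the Dyson–Schwinger ODE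
`γ'(x) = (γ(x) + γ(x)² − P(x)) / (s·x·γ(x))` on the set `I`. -/
def IsDSSolution (s : ℝ) (P γ : ℝ → ℝ) (I : Set ℝ) : Prop :=
  (∀ x ∈ I, 0 < γ x) ∧
    ∀ x ∈ I, HasDerivWithinAt γ ((γ x + (γ x) ^ 2 - P x) / (s * x * γ x)) I x

/-- Hypothesis H1: `P` is twice continuously differentiable on `[0,∞)`,
`P 0 = 0`, and `P x > 0` for `x > 0`. -/
def H1 (P : ℝ → ℝ) : Prop :=
  ContDiffOn ℝ 2 P (Set.Ici 0) ∧ P 0 = 0 ∧ ∀ x > (0 : ℝ), 0 < P x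

/-- Hypothesis H2: `P` is strictly increasing on `[0,∞)`. -/
def H2 (P : ℝ → ℝ) : Prop := StrictMonoOn P (Set.Ici 0)

/-- The nullcline `γ_c(x) = (√(1 + 4 P x) − 1)/2`. -/
def gammaC (P : ℝ → ℝ) (x : ℝ) : ℝ := (Real.sqrt (1 + 4 * P x) - 1) / 2

/-!
The field is singular at `γ = 0`, so replace the denominator `γ` by `max γ δ` with
`δ = gammaC P x₀`. The new field is Lipschitz in `γ`: its solutions are global, and depend
continuously and monotonically on the value at `x₀`.

A global positive solution never drops below the nullcline: if it did, then, `P` being increasing,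
it would stay below a barrier `γ(x) - k log (y / x)` with `k > 0` and become negative. So it stays
above `δ`, and the global positive solutions are exactly the solutions of the new field that stay
above `δ`. Their initial values form a closed upper set.

This set is nonempty. Dropping the term `γ` from the numerator leaves a Bernoulli equation, whose
solution `β ^ 2 = x ^ (2 / s) * (C - (2 / s) * ∫ P z / z ^ (1 + 2 / s))` stays positive for large
`C` because the integral converges, and `β` is a subsolution.

Its infimum exceeds `gammaC P x₀`, since a global solution starting on or below the nullcline would
be constant by Grönwall, and then lie below the nullcline as soon as `P` has increased.
-/

open scoped NNReal

section IntegralCurves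

variable {E : Type*} [NormedAddCommGroup E] [NormedSpace ℝ E] {a b : ℝ} {K : ℝ≥0}

theorem dist_le_of_isIntegralCurveOn_Icc {v : ℝ → E → E} {f g : ℝ → E}
    (hv : ∀ t ∈ Icc a b, LipschitzWith K (v t)) (hf : IsIntegralCurveOn f v (Icc a b))
    (hg : IsIntegralCurveOn g v (Icc a b)) :
    ∀ t ∈ Icc a b, dist (f t) (g t) ≤ dist (f a) (g a) * exp (K * (t - a)) := by
  have hright {h : ℝ → E} (hh : IsIntegralCurveOn h v (Icc a b)) :
      ∀ t ∈ Ico a b, HasDerivWithinAt h (v t (h t)) (Ici t) t := fun t ht =>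
    (hh t (Ico_subset_Icc_self ht)).mono_of_mem_nhdsWithin (Icc_mem_nhdsGE_of_mem ht)
  exact dist_le_of_trajectories_ODE_of_mem (s := fun _ => univ)
    (fun t ht => (hv t (Ico_subset_Icc_self ht)).lipschitzOnWith)
    hf.continuousOn (hright hf) (fun _ _ => mem_univ _)
    hg.continuousOn (hright hg) (fun _ _ => mem_univ _) le_rfl

theorem eqOn_of_isIntegralCurveOn_Icc {v : ℝ → E → E} {f g : ℝ → E}
    (hv : ∀ t ∈ Icc a b, LipschitzWith K (v t)) (hf : IsIntegralCurveOn f v (Icc a b))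
    (hg : IsIntegralCurveOn g v (Icc a b)) (h : f a = g a) : EqOn f g (Icc a b) := fun t ht =>
  dist_le_zero.1 <| by simpa [h] using dist_le_of_isIntegralCurveOn_Icc hv hf hg t ht

theorem le_of_isIntegralCurveOn_Icc {v : ℝ → ℝ → ℝ} {f g : ℝ → ℝ} (hab : a ≤ b)
    (hv : ∀ t ∈ Icc a b, LipschitzWith K (v t)) (hf : IsIntegralCurveOn f v (Icc a b))
    (hg : IsIntegralCurveOn g v (Icc a b)) (h : f a ≤ g a) : f b ≤ g b := by
  by_contra! hlt
  obtain ⟨c, hc, hfg⟩ : ∃ c ∈ Icc a b, g c - f c = 0 :=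
    intermediate_value_Icc' hab (hg.continuousOn.sub hf.continuousOn)
      ⟨(sub_neg.2 hlt).le, sub_nonneg.2 h⟩
  have hsub : Icc c b ⊆ Icc a b := Icc_subset_Icc_left hc.1
  exact hlt.ne' (eqOn_of_isIntegralCurveOn_Icc (fun t ht => hv t (hsub ht)) (hf.mono hsub)
    (hg.mono hsub) (sub_eq_zero.1 hfg).symm (right_mem_Icc.2 hc.2))

theorem exists_isIntegralCurveOn_Icc_of_norm_le [CompleteSpace E] {v : ℝ → E → E} {L : ℝ≥0}
    (hab : a ≤ b) (hv : ∀ t ∈ Icc a b, LipschitzWith K (v t))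
    (hL : ∀ t ∈ Icc a b, ∀ y, ‖v t y‖ ≤ L) (hc : ∀ y, ContinuousOn (v · y) (Icc a b)) (y₀ : E) :
    ∃ f : ℝ → E, f a = y₀ ∧ IsIntegralCurveOn f v (Icc a b) := by
  have hPL : IsPicardLindelof v (⟨a, left_mem_Icc.2 hab⟩ : Icc a b) y₀
      (L * (b - a).toNNReal) 0 L K :=
    { lipschitzOnWith := fun t ht => (hv t ht).lipschitzOnWith
      continuousOn := fun y _ => hc y
      norm_le := fun t ht y _ => hL t ht y
      mul_max_le := by simp [hab] }
  exact hPL.exists_eq_forall_mem_Icc_hasDerivWithinAt₀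

theorem lipschitzWith_clamp (R : ℝ) : LipschitzWith 1 fun y : ℝ => max (-R) (min R y) :=
  (LipschitzWith.id.const_min R).const_max (-R)

/- Grönwall bounds every solution by some `R`, so clamping the state to `[-R, R]` changes no
solution and makes the field bounded. -/
theorem exists_isIntegralCurveOn_Icc {v : ℝ → ℝ → ℝ} (hab : a ≤ b)
    (hv : ∀ t ∈ Icc a b, LipschitzWith K (v t)) (hc : ∀ y, ContinuousOn (v · y) (Icc a b))
    (y₀ : ℝ) : ∃ f : ℝ → ℝ, f a = y₀ ∧ IsIntegralCurveOn f v (Icc a b) := by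
  obtain ⟨M, hM⟩ := isCompact_Icc.exists_bound_of_continuousOn (hc 0)
  have hM₀ : 0 ≤ M := (norm_nonneg _).trans (hM a (left_mem_Icc.2 hab))
  have hgrowth : ∀ t ∈ Icc a b, ∀ y, ‖v t y‖ ≤ K * ‖y‖ + M := fun t ht y => by
    have hsub : ‖v t y - v t 0‖ ≤ K * ‖y‖ := by simpa using (hv t ht).norm_sub_le y 0
    linarith [norm_sub_norm_le (v t y) (v t 0), hM t ht]
  have hmono : Monotone (gronwallBound ‖y₀‖ K M) := gronwallBound_mono (norm_nonneg _) hM₀ K.2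
  set R := gronwallBound ‖y₀‖ K M (b - a)
  have hR : 0 ≤ R := (norm_nonneg y₀).trans <| by
    simpa only [gronwallBound_x0] using hmono (sub_nonneg.2 hab)
  set clamp : ℝ → ℝ := fun y => max (-R) (min R y)
  have clamp_abs_le (y : ℝ) : ‖clamp y‖ ≤ R :=
    abs_le.2 ⟨le_max_left _ _, max_le (by linarith) (min_le_left _ _)⟩
  have clamp_abs_le_abs (y : ℝ) : ‖clamp y‖ ≤ ‖y‖ := by
    simpa [clamp, hR] using (lipschitzWith_clamp R).norm_sub_le y 0
  obtain ⟨f, hfa, hf⟩ := exists_isIntegralCurveOn_Icc_of_norm_le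
    (v := fun t y => v t (clamp y)) (K := K * 1) (L := (K * R + M).toNNReal) hab
    (fun t ht => (hv t ht).comp (lipschitzWith_clamp R))
    (fun t ht y => (hgrowth t ht _).trans <|
      le_trans (by gcongr; exact clamp_abs_le y) (le_coe_toNNReal _))
    (fun y => hc (clamp y)) y₀
  have hfR : ∀ t ∈ Icc a b, ‖f t‖ ≤ R := fun t ht =>
    (norm_le_gronwallBound_of_norm_deriv_right_le hf.continuousOn
      (fun t ht => (hf t (Ico_subset_Icc_self ht)).mono_of_mem_nhdsWithin
        (Icc_mem_nhdsGE_of_mem ht)) (by rw [hfa])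
      (fun t ht => (hgrowth t (Ico_subset_Icc_self ht) _).trans <| by
        gcongr; exact clamp_abs_le_abs _) t ht).trans (hmono (by linarith [ht.2]))
  refine ⟨f, hfa, fun t ht => (hf t ht).congr_deriv ?_⟩
  obtain ⟨hle, hge⟩ := abs_le.1 (hfR t ht)
  simp only [clamp, min_eq_right hge, max_eq_right hle]

theorem exists_isIntegralCurveOn_Ici {v : ℝ → ℝ → ℝ}
    (hv : ∀ b, ∃ K : ℝ≥0, ∀ t ∈ Icc a b, LipschitzWith K (v t))
    (hc : ∀ y, ContinuousOn (v · y) (Ici a)) (y₀ : ℝ) :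
    ∃ f : ℝ → ℝ, f a = y₀ ∧ IsIntegralCurveOn f v (Ici a) := by
  have hIcc (b : ℝ) : ∃ f : ℝ → ℝ, a ≤ b → f a = y₀ ∧ IsIntegralCurveOn f v (Icc a b) := by
    rcases le_or_gt a b with hab | hba
    · obtain ⟨K, hK⟩ := hv b
      obtain ⟨f, hf⟩ := exists_isIntegralCurveOn_Icc hab hK
        (fun y => (hc y).mono Icc_subset_Ici_self) y₀
      exact ⟨f, fun _ => hf⟩
    · exact ⟨0, fun hab => absurd hab hba.not_ge⟩
  choose F hF using hIcc
  have agree {t b : ℝ} (hat : a ≤ t) (htb : t ≤ b) : F t t = F b t := by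
    obtain ⟨K, hK⟩ := hv t
    obtain ⟨hFb₀, hFb⟩ := hF b (hat.trans htb)
    exact eqOn_of_isIntegralCurveOn_Icc hK (hF t hat).2 (hFb.mono (Icc_subset_Icc_right htb))
      ((hF t hat).1.trans hFb₀.symm) (right_mem_Icc.2 hat)
  refine ⟨fun t => F t t, (hF a le_rfl).1, fun t (hat : a ≤ t) => ?_⟩
  have htb : t < t + 1 := lt_add_one t
  have hmem : Icc a (t + 1) ∈ nhdsWithin t (Ici a) := by
    rw [← Ici_inter_Iic]
    exact inter_mem_nhdsWithin _ (Iic_mem_nhds htb)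
  have hsol := (hF (t + 1) (hat.trans htb.le)).2 t ⟨hat, htb.le⟩
  rw [← agree hat htb.le] at hsol
  refine (hsol.mono_of_mem_nhdsWithin hmem).congr_of_eventuallyEq ?_ (agree hat htb.le)
  filter_upwards [hmem] with u hu using agree hu.1 hu.2

theorem continuous_integralCurve_apply {v : ℝ → E → E} {u : E → ℝ → E}
    (hv : ∀ b, ∃ K : ℝ≥0, ∀ t ∈ Icc a b, LipschitzWith K (v t))
    (hu : ∀ c, u c a = c ∧ IsIntegralCurveOn (u c) v (Ici a)) (hab : a ≤ b) :
    Continuous fun c => u c b := by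
  obtain ⟨K, hK⟩ := hv b
  refine (LipschitzWith.of_dist_le' (K := exp (K * (b - a))) fun c d => ?_).continuous
  simpa only [(hu _).1, mul_comm] using dist_le_of_isIntegralCurveOn_Icc hK
    ((hu c).2.mono Icc_subset_Ici_self) ((hu d).2.mono Icc_subset_Ici_self) b (right_mem_Icc.2 hab)

theorem monotone_integralCurve_apply {v : ℝ → ℝ → ℝ} {u : ℝ → ℝ → ℝ}
    (hv : ∀ b, ∃ K : ℝ≥0, ∀ t ∈ Icc a b, LipschitzWith K (v t))
    (hu : ∀ c, u c a = c ∧ IsIntegralCurveOn (u c) v (Ici a)) (hab : a ≤ b) :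
    Monotone fun c => u c b := fun c d hcd => by
  obtain ⟨K, hK⟩ := hv b
  exact le_of_isIntegralCurveOn_Icc hab hK ((hu c).2.mono Icc_subset_Ici_self)
    ((hu d).2.mono Icc_subset_Ici_self) (by rwa [(hu c).1, (hu d).1])

end IntegralCurves

theorem le_of_forall_eq_imp_deriv_lt {f g f' g' : ℝ → ℝ} {a : ℝ}
    (hf : ∀ t ∈ Ici a, HasDerivWithinAt f (f' t) (Ici a) t)
    (hg : ∀ t ∈ Ici a, HasDerivWithinAt g (g' t) (Ici a) t) (ha : f a ≤ g a)
    (hlt : ∀ t ∈ Ici a, f t = g t → f' t < g' t) : ∀ t ∈ Ici a, f t ≤ g t := fun t ht =>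
  image_le_of_deriv_right_lt_deriv_boundary' (a := a) (b := t)
    (fun x hx => (hf x hx.1).continuousWithinAt.mono Icc_subset_Ici_self)
    (fun x hx => (hf x hx.1).mono (Ici_subset_Ici.2 hx.1)) ha
    (fun x hx => (hg x hx.1).continuousWithinAt.mono Icc_subset_Ici_self)
    (fun x hx => (hg x hx.1).mono (Ici_subset_Ici.2 hx.1)) (fun x hx => hlt x hx.1)
    (right_mem_Icc.2 ht)

theorem exists_primitive_ge_of_integrableOn_Ici {f : ℝ → ℝ} {a : ℝ} (hf : ContinuousOn f (Ici a))
    (hfi : IntegrableOn f (Ici a)) (m : ℝ) :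
    ∃ F : ℝ → ℝ, (∀ x ∈ Ici a, m ≤ F x) ∧ ∀ x ∈ Ici a, HasDerivWithinAt F (f x) (Ici a) x := by
  refine ⟨fun x => m + (∫ z in Ici a, ‖f z‖) + ∫ z in a..x, f z, fun x (hx : a ≤ x) => ?_,
    fun x (hx : a ≤ x) => ?_⟩
  · have hle : |∫ z in a..x, f z| ≤ ∫ z in Ici a, ‖f z‖ :=
      intervalIntegral.norm_integral_le_integral_norm_uIoc.trans <|
        setIntegral_mono_set hfi.norm (ae_of_all _ fun _ => norm_nonneg _)
          (by
            rw [uIoc_of_le hx]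
            exact (Ioc_subset_Icc_self.trans Icc_subset_Ici_self).eventuallyLE)
    linarith [neg_abs_le (∫ z in a..x, f z)]
  · have hxmem : x ∈ Icc a (x + 1) := ⟨hx, (lt_add_one x).le⟩
    have : Fact (x ∈ Icc a (x + 1)) := ⟨hxmem⟩
    have hcont : ContinuousOn f (Icc a (x + 1)) := hf.mono Icc_subset_Ici_self
    have hderiv : HasDerivWithinAt (fun u => ∫ z in a..u, f z) (f x) (Icc a (x + 1)) x :=
      intervalIntegral.integral_hasDerivWithinAt_right
        ((hf.mono Icc_subset_Ici_self).intervalIntegrable_of_Icc hx)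
        (hcont.stronglyMeasurableAtFilter_nhdsWithin measurableSet_Icc x) (hcont x hxmem)
    refine (hderiv.mono_of_mem_nhdsWithin ?_).const_add _
    rw [← Ici_inter_Iic]
    exact inter_mem_nhdsWithin _ (Iic_mem_nhds (lt_add_one x))

section Nullcline

variable {P : ℝ → ℝ} {x g : ℝ}

theorem gammaC_le_iff (hg : 0 ≤ g) : gammaC P x ≤ g ↔ P x ≤ g + g ^ 2 := by
  have hsqrt : gammaC P x ≤ g ↔ √(1 + 4 * P x) ≤ 2 * g + 1 := by
    unfold gammaC
    constructor <;> intro h <;> linarith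
  rw [hsqrt, Real.sqrt_le_left (by positivity)]
  constructor <;> intro h <;> linarith

theorem gammaC_lt_iff (hg : 0 ≤ g) : gammaC P x < g ↔ P x < g + g ^ 2 := by
  have hsqrt : gammaC P x < g ↔ √(1 + 4 * P x) < 2 * g + 1 := by
    unfold gammaC
    constructor <;> intro h <;> linarith
  rw [hsqrt, Real.sqrt_lt' (by positivity)]
  constructor <;> intro h <;> linarith

theorem gammaC_pos (hP : 0 < P x) : 0 < gammaC P x := by
  rw [← not_le, gammaC_le_iff le_rfl]
  simpa using hP

end Nullcline

namespace IsDSSolution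

variable {s : ℝ} {P γ : ℝ → ℝ} {x₀ x : ℝ}

theorem mono {I J : Set ℝ} (hγ : IsDSSolution s P γ I) (hJI : J ⊆ I) : IsDSSolution s P γ J :=
  ⟨fun x hx => hγ.1 x (hJI hx), fun x hx => (hγ.2 x (hJI hx)).mono hJI⟩

theorem le_sub_mul_log (hs : 0 < s) (hx₀ : 0 < x₀) (hP : MonotoneOn P (Ici x₀))
    (hγ : IsDSSolution s P γ (Ici x₀)) {k : ℝ} (hk₀ : 0 ≤ k)
    (hk : γ x₀ + γ x₀ ^ 2 + k * s * γ x₀ < P x₀) :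
    ∀ x ∈ Ici x₀, γ x ≤ γ x₀ - k * (log x - log x₀) := by
  refine le_of_forall_eq_imp_deriv_lt hγ.2 (g' := fun t => -(k * t⁻¹)) (fun t ht => ?_)
    (by simp) fun t ht heq => ?_
  · exact ((((hasDerivAt_log (hx₀.trans_le ht).ne').sub_const (log x₀)).const_mul k).const_sub
      (γ x₀)).hasDerivWithinAt
  · have ht₀ : 0 < t := hx₀.trans_le ht
    have hγt : 0 < γ t := hγ.1 t ht
    have hγle : γ t ≤ γ x₀ := by
      have := mul_nonneg hk₀ (sub_nonneg.2 (log_le_log hx₀ ht))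
      linarith
    have hbelow : γ t + γ t ^ 2 - P t < -(k * s * γ t) := by
      have hPt : P x₀ ≤ P t := hP self_mem_Ici ht ht
      have : γ t + γ t ^ 2 + k * s * γ t ≤ γ x₀ + γ x₀ ^ 2 + k * s * γ x₀ := by gcongr
      linarith
    calc (γ t + γ t ^ 2 - P t) / (s * t * γ t) < -(k * s * γ t) / (s * t * γ t) := by gcongr
      _ = -(k * t⁻¹) := by field_simp

theorem le_add_sq (hs : 0 < s) (hx₀ : 0 < x₀) (hP : MonotoneOn P (Ici x₀))
    (hγ : IsDSSolution s P γ (Ici x₀)) : ∀ x ∈ Ici x₀, P x ≤ γ x + γ x ^ 2 := by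
  intro x hx
  have hsub : Ici x ⊆ Ici x₀ := Ici_subset_Ici.2 hx
  by_contra! hlt
  obtain ⟨k, hk₀, hk⟩ := exists_pos_mul_lt (sub_pos.2 hlt) (s * γ x)
  have hdecay : ∀ y ∈ Ici x, γ y ≤ γ x - k * (log y - log x) :=
    (hγ.mono hsub).le_sub_mul_log hs (hx₀.trans_le hx) (hP.mono hsub) hk₀.le (by linarith)
  have hlim : Tendsto (fun y => k * (log y - log x)) atTop atTop :=
    (tendsto_atTop_add_const_right _ _ tendsto_log_atTop).const_mul_atTop hk₀
  obtain ⟨y, hy, hxy⟩ := ((hlim.eventually_gt_atTop (γ x)).and (eventually_ge_atTop x)).exists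
  linarith [hdecay y hxy, hγ.1 y (hsub hxy)]

/- The solution stays above the nullcline, so `0 ≤ γ' ≤ K * (γ - γ x₀)`, and Grönwall applies. -/
theorem eq_left_of_add_sq_le (hs : 0 < s) (hx₀ : 0 < x₀) (hP : MonotoneOn P (Ici x₀))
    (hγ : IsDSSolution s P γ (Ici x₀)) (hle : γ x₀ + γ x₀ ^ 2 ≤ P x₀) :
    ∀ x ∈ Ici x₀, γ x = γ x₀ := by
  intro x hx
  have hγ₀ : 0 < γ x₀ := hγ.1 x₀ self_mem_Ici
  have hbound : ∀ t ∈ Ici x₀, ‖(γ t + γ t ^ 2 - P t) / (s * t * γ t)‖ ≤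
      (1 + (1 + γ x₀) / γ x₀) / (s * x₀) * ‖γ t - γ x₀‖ := fun t (ht : x₀ ≤ t) => by
    have ht₀ : 0 < t := hx₀.trans_le ht
    have hγt : 0 < γ t := hγ.1 t ht
    have hPt : P x₀ ≤ P t := hP self_mem_Ici ht ht
    have habove : P t ≤ γ t + γ t ^ 2 := hγ.le_add_sq hs hx₀ hP t ht
    have hge : γ x₀ ≤ γ t := by nlinarith
    have hgap : 0 ≤ γ t - γ x₀ := sub_nonneg.2 hge
    rw [norm_of_nonneg (div_nonneg (sub_nonneg.2 habove) (by positivity)), norm_of_nonneg hgap]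
    calc (γ t + γ t ^ 2 - P t) / (s * t * γ t)
        ≤ (γ t - γ x₀) * (1 + γ t + γ x₀) / (s * t * γ t) := by gcongr; linarith
      _ = (1 + (1 + γ x₀) / γ t) / (s * t) * (γ t - γ x₀) := by field_simp; ring
      _ ≤ (1 + (1 + γ x₀) / γ x₀) / (s * x₀) * (γ t - γ x₀) := by gcongr
  exact sub_eq_zero.1 <|
    eq_zero_of_abs_deriv_le_mul_abs_self_of_eq_zero_right (a := x₀) (b := x)
      (f := fun t => γ t - γ x₀)
      (fun t ht => ((hγ.2 t ht.1).continuousWithinAt.mono Icc_subset_Ici_self).sub_const _)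
      (fun t ht => ((hγ.2 t ht.1).mono (Ici_subset_Ici.2 ht.1)).sub_const _) (sub_self _)
      (fun t ht => hbound t ht.1) x (right_mem_Icc.2 hx)

theorem gammaC_lt_left (hs : 0 < s) (hx₀ : 0 < x₀) (hP : MonotoneOn P (Ici x₀))
    (hγ : IsDSSolution s P γ (Ici x₀)) (hx : x ∈ Ici x₀) (hPx : P x₀ < P x) :
    gammaC P x₀ < γ x₀ := by
  rw [gammaC_lt_iff (hγ.1 x₀ self_mem_Ici).le]
  by_contra! hle
  have hPle : P x ≤ γ x + γ x ^ 2 := hγ.le_add_sq hs hx₀ hP x hx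
  rw [hγ.eq_left_of_add_sq_le hs hx₀ hP hle x hx] at hPle
  linarith

end IsDSSolution

/-- The Dyson–Schwinger field with the denominator `γ` replaced by `max γ δ`. It is Lipschitz in
`γ`, and unchanged where `δ ≤ γ`. -/
def cutoffField (s : ℝ) (P : ℝ → ℝ) (δ x y : ℝ) : ℝ :=
  (1 + y - P x / max y δ) / (s * x)

section CutoffField

variable {s δ x₀ : ℝ} {P : ℝ → ℝ}

theorem isDSSolution_iff_isIntegralCurveOn_cutoffField {γ : ℝ → ℝ} {I : Set ℝ} (hδ : 0 < δ)
    (hle : ∀ x ∈ I, δ ≤ γ x) :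
    IsDSSolution s P γ I ↔ IsIntegralCurveOn γ (cutoffField s P δ) I := by
  have hpos : ∀ x ∈ I, 0 < γ x := fun x hx => hδ.trans_le (hle x hx)
  have hfield : ∀ x ∈ I,
      (γ x + γ x ^ 2 - P x) / (s * x * γ x) = cutoffField s P δ x (γ x) := fun x hx => by
    have := hpos x hx
    rw [cutoffField, max_eq_left (hle x hx), mul_comm (s * x), ← div_div]
    congr 1
    field_simp
  rw [IsDSSolution, and_iff_right hpos]
  exact forall₂_congr fun x hx => by rw [hfield x hx]

theorem lipschitzWith_inv_max (hδ : 0 < δ) :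
    LipschitzWith (δ ^ 2)⁻¹.toNNReal fun y : ℝ => (max y δ)⁻¹ :=
  LipschitzWith.of_dist_le' fun y z => by
    have hy : δ ≤ max y δ := le_max_right _ _
    have hz : δ ≤ max z δ := le_max_right _ _
    have hy₀ : 0 < max y δ := hδ.trans_le hy
    have hz₀ : 0 < max z δ := hδ.trans_le hz
    rw [Real.dist_eq, Real.dist_eq, inv_sub_inv hy₀.ne' hz₀.ne', abs_div,
      abs_of_pos (mul_pos hy₀ hz₀), abs_sub_comm (max z δ), div_eq_inv_mul, sq]
    exact mul_le_mul (inv_anti₀ (mul_pos hδ hδ) (mul_le_mul hy hz hδ.le hy₀.le))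
      (abs_max_sub_max_le_abs y z δ) (abs_nonneg _) (inv_nonneg.2 (mul_pos hδ hδ).le)

theorem exists_lipschitzWith_cutoffField (hs : 0 < s) (hδ : 0 < δ) (hx₀ : 0 < x₀)
    (hP : ContinuousOn P (Ici x₀)) (b : ℝ) :
    ∃ K : ℝ≥0, ∀ x ∈ Icc x₀ b, LipschitzWith K (cutoffField s P δ x) := by
  obtain ⟨M, hM⟩ :=
    isCompact_Icc.exists_bound_of_continuousOn (hP.mono (Icc_subset_Ici_self : Icc x₀ b ⊆ Ici x₀))
  refine ⟨((1 + M * (δ ^ 2)⁻¹) / (s * x₀)).toNNReal, fun x hx =>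
    LipschitzWith.of_dist_le' fun y z => ?_⟩
  have hx' : x₀ ≤ x := hx.1
  have hx_pos : 0 < x := hx₀.trans_le hx'
  have hM₀ : 0 ≤ M := (norm_nonneg _).trans (hM x hx)
  have hinv : |(max y δ)⁻¹ - (max z δ)⁻¹| ≤ (δ ^ 2)⁻¹ * |y - z| := by
    simpa [Real.dist_eq, hδ.le] using (lipschitzWith_inv_max hδ).dist_le_mul y z
  have hdiff : cutoffField s P δ x y - cutoffField s P δ x z =
      ((y - z) - P x * ((max y δ)⁻¹ - (max z δ)⁻¹)) / (s * x) := by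
    unfold cutoffField
    ring
  rw [Real.dist_eq, Real.dist_eq, hdiff, abs_div, abs_of_pos (mul_pos hs hx_pos)]
  calc |(y - z) - P x * ((max y δ)⁻¹ - (max z δ)⁻¹)| / (s * x)
      ≤ (|y - z| + |P x| * |(max y δ)⁻¹ - (max z δ)⁻¹|) / (s * x) := by
        rw [← abs_mul]
        gcongr
        exact abs_sub _ _
    _ ≤ (|y - z| + M * ((δ ^ 2)⁻¹ * |y - z|)) / (s * x₀) := by
        gcongr
        exact hM x hx
    _ = (1 + M * (δ ^ 2)⁻¹) / (s * x₀) * |y - z| := by ring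

theorem continuousOn_cutoffField (hs : 0 < s) (hx₀ : 0 < x₀)
    (hP : ContinuousOn P (Ici x₀)) (y : ℝ) : ContinuousOn (cutoffField s P δ · y) (Ici x₀) :=
  (continuousOn_const.sub (hP.div_const _)).div (continuousOn_const.mul continuousOn_id)
    fun _ hx => (mul_pos hs (hx₀.trans_le hx)).ne'

theorem exists_integralCurves_cutoffField (hs : 0 < s) (hδ : 0 < δ) (hx₀ : 0 < x₀)
    (hP : ContinuousOn P (Ici x₀)) :
    ∃ u : ℝ → ℝ → ℝ, ∀ c, u c x₀ = c ∧ IsIntegralCurveOn (u c) (cutoffField s P δ) (Ici x₀) :=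
  Classical.skolem.1 <| exists_isIntegralCurveOn_Ici
    (exists_lipschitzWith_cutoffField hs hδ hx₀ hP) (continuousOn_cutoffField hs hx₀ hP)

end CutoffField

section Bernoulli

variable {s x₀ : ℝ} {P : ℝ → ℝ}

theorem isIntegralCurveOn_bernoulli (hs : 0 < s) {Z : ℝ → ℝ} {I : Set ℝ} (hI : I ⊆ Ioi 0)
    (hZ : ∀ x ∈ I, 0 < Z x)
    (hZ' : ∀ x ∈ I, HasDerivWithinAt Z (-(2 / s) * (P x / x ^ (1 + 2 / s))) I x) :
    IsIntegralCurveOn (fun x => x ^ (1 / s) * √(Z x))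
      (fun x y => (y ^ 2 - P x) / (s * x * y)) I := by
  intro x hx
  have hx₀ : 0 < x := hI hx
  have hr : 0 < √(Z x) := sqrt_pos.2 (hZ x hx)
  have hpow : x ^ (1 + 2 / s) = x * (x ^ (1 / s)) ^ 2 := by
    rw [rpow_add hx₀, rpow_one, ← rpow_mul_natCast hx₀.le]
    congr 2
    push_cast
    ring
  refine ((hasDerivAt_rpow_const (p := 1 / s) (Or.inl hx₀.ne')).hasDerivWithinAt.fun_mul
    ((hZ' x hx).sqrt (hZ x hx).ne')).congr_deriv ?_
  rw [rpow_sub_one hx₀.ne', hpow]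
  field_simp
  ring

theorem exists_bernoulli_solution_ge (hs : 0 < s) (hx₀ : 0 < x₀) (hP : ContinuousOn P (Ici x₀))
    (hInt : IntegrableOn (fun z => P z / z ^ (1 + 2 / s)) (Ici x₀)) {δ : ℝ} (hδ : 0 < δ) :
    ∃ β : ℝ → ℝ, (∀ x ∈ Ici x₀, δ ≤ β x) ∧
      IsIntegralCurveOn β (fun x y => (y ^ 2 - P x) / (s * x * y)) (Ici x₀) := by
  have hI : Ici x₀ ⊆ Ioi 0 := Ici_subset_Ioi.2 hx₀
  have hcont : ContinuousOn (fun z => P z / z ^ (1 + 2 / s)) (Ici x₀) :=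
    hP.div (continuousOn_id.rpow_const fun x hx => Or.inl (hI hx).ne')
      fun x hx => (rpow_pos_of_pos (hI hx) _).ne'
  obtain ⟨Z, hZ, hZ'⟩ := exists_primitive_ge_of_integrableOn_Ici (hcont.const_mul (-(2 / s)))
    (hInt.const_mul (-(2 / s))) ((δ / x₀ ^ (1 / s)) ^ 2)
  have hZpos : ∀ x ∈ Ici x₀, 0 < Z x := fun x hx => (by positivity : (0 : ℝ) < _).trans_le (hZ x hx)
  refine ⟨_, fun x (hx : x₀ ≤ x) => ?_, isIntegralCurveOn_bernoulli hs hI hZpos hZ'⟩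
  calc δ = x₀ ^ (1 / s) * (δ / x₀ ^ (1 / s)) := by field_simp
    _ ≤ x ^ (1 / s) * √(Z x) :=
      mul_le_mul (rpow_le_rpow hx₀.le hx (by positivity)) (le_sqrt_of_sq_le (hZ x hx))
        (by positivity) (rpow_nonneg (hx₀.le.trans hx) _)

/- The Bernoulli field is the Dyson–Schwinger field without its term `1 / (s x)`. -/
theorem exists_forall_le_of_isIntegralCurveOn_cutoffField (hs : 0 < s) (hx₀ : 0 < x₀)
    (hP : ContinuousOn P (Ici x₀))
    (hInt : IntegrableOn (fun z => P z / z ^ (1 + 2 / s)) (Ici x₀)) {δ : ℝ} (hδ : 0 < δ) :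
    ∃ c, ∀ f : ℝ → ℝ, f x₀ = c → IsIntegralCurveOn f (cutoffField s P δ) (Ici x₀) →
      ∀ x ∈ Ici x₀, δ ≤ f x := by
  obtain ⟨β, hδβ, hβ⟩ := exists_bernoulli_solution_ge hs hx₀ hP hInt hδ
  refine ⟨β x₀, fun f hf₀ hf x hx => (hδβ x hx).trans ?_⟩
  refine le_of_forall_eq_imp_deriv_lt hβ hf hf₀.ge (fun t ht heq => ?_) x hx
  have ht₀ : 0 < t := hx₀.trans_le ht
  have hβt : 0 < β t := hδ.trans_le (hδβ t ht)
  calc (β t ^ 2 - P t) / (s * t * β t) = (β t - P t / β t) / (s * t) := by field_simp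
    _ < (1 + β t - P t / β t) / (s * t) := by gcongr; linarith
    _ = cutoffField s P δ t (f t) := by rw [← heq, cutoffField, max_eq_left (hδβ t ht)]

end Bernoulli

/-- The values at `x₀` of the positive solutions on `[x₀, ∞)`; the least one is the initial value of
the separatrix. -/
def globalInitialValues (s : ℝ) (P : ℝ → ℝ) (x₀ : ℝ) : Set ℝ :=
  {c | ∃ γ : ℝ → ℝ, IsDSSolution s P γ (Ici x₀) ∧ γ x₀ = c}

section GlobalInitialValues

variable {s x₀ : ℝ} {P : ℝ → ℝ}

theorem globalInitialValues_eq_setOf_forall_gammaC_le (hs : 0 < s) (hx₀ : 0 < x₀)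
    (hcont : ContinuousOn P (Ici x₀)) (hmono : MonotoneOn P (Ici x₀)) (hpos : 0 < P x₀)
    {u : ℝ → ℝ → ℝ} (hu : ∀ c, u c x₀ = c ∧
      IsIntegralCurveOn (u c) (cutoffField s P (gammaC P x₀)) (Ici x₀)) :
    globalInitialValues s P x₀ = {c | ∀ x ∈ Ici x₀, gammaC P x₀ ≤ u c x} := by
  have hδ : 0 < gammaC P x₀ := gammaC_pos hpos
  ext c
  constructor
  · rintro ⟨γ, hγ, rfl⟩ x hx
    have hle : ∀ t ∈ Ici x₀, gammaC P x₀ ≤ γ t := fun t ht =>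
      (gammaC_le_iff (hγ.1 t ht).le).2
        ((hmono self_mem_Ici ht ht).trans (hγ.le_add_sq hs hx₀ hmono t ht))
    obtain ⟨K, hK⟩ := exists_lipschitzWith_cutoffField hs hδ hx₀ hcont x
    have hγ' := (isDSSolution_iff_isIntegralCurveOn_cutoffField hδ hle).1 hγ
    have heq : u (γ x₀) x = γ x := eqOn_of_isIntegralCurveOn_Icc hK
      ((hu _).2.mono Icc_subset_Ici_self) (hγ'.mono Icc_subset_Ici_self) (hu _).1
      (right_mem_Icc.2 hx)
    exact heq ▸ hle x hx
  · exact fun hc =>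
      ⟨u c, (isDSSolution_iff_isIntegralCurveOn_cutoffField hδ hc).2 (hu c).2, (hu c).1⟩

theorem isClosed_globalInitialValues (hs : 0 < s) (hx₀ : 0 < x₀)
    (hcont : ContinuousOn P (Ici x₀)) (hmono : MonotoneOn P (Ici x₀)) (hpos : 0 < P x₀) :
    IsClosed (globalInitialValues s P x₀) := by
  have hlip := exists_lipschitzWith_cutoffField hs (gammaC_pos hpos) hx₀ hcont
  obtain ⟨u, hu⟩ := exists_integralCurves_cutoffField hs (gammaC_pos hpos) hx₀ hcont
  rw [globalInitialValues_eq_setOf_forall_gammaC_le hs hx₀ hcont hmono hpos hu]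
  simp only [ofPred_forall]
  exact isClosed_biInter fun x hx =>
    isClosed_le continuous_const (continuous_integralCurve_apply hlip hu hx)

theorem isUpperSet_globalInitialValues (hs : 0 < s) (hx₀ : 0 < x₀)
    (hcont : ContinuousOn P (Ici x₀)) (hmono : MonotoneOn P (Ici x₀)) (hpos : 0 < P x₀) :
    IsUpperSet (globalInitialValues s P x₀) := by
  have hlip := exists_lipschitzWith_cutoffField hs (gammaC_pos hpos) hx₀ hcont
  obtain ⟨u, hu⟩ := exists_integralCurves_cutoffField hs (gammaC_pos hpos) hx₀ hcont
  rw [globalInitialValues_eq_setOf_forall_gammaC_le hs hx₀ hcont hmono hpos hu]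
  exact fun c d hcd hc x hx => (hc x hx).trans (monotone_integralCurve_apply hlip hu hx hcd)

theorem globalInitialValues_nonempty (hs : 0 < s) (hx₀ : 0 < x₀)
    (hcont : ContinuousOn P (Ici x₀))
    (hInt : IntegrableOn (fun z => P z / z ^ (1 + 2 / s)) (Ici x₀)) :
    (globalInitialValues s P x₀).Nonempty := by
  obtain ⟨u, hu⟩ := exists_integralCurves_cutoffField hs one_pos hx₀ hcont
  obtain ⟨c, hc⟩ := exists_forall_le_of_isIntegralCurveOn_cutoffField hs hx₀ hcont hInt one_pos
  exact ⟨c, u c, (isDSSolution_iff_isIntegralCurveOn_cutoffField one_pos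
    (hc _ (hu c).1 (hu c).2)).2 (hu c).2, (hu c).1⟩

theorem bddBelow_globalInitialValues : BddBelow (globalInitialValues s P x₀) := by
  refine ⟨0, ?_⟩
  rintro _ ⟨γ, hγ, rfl⟩
  exact (hγ.1 x₀ self_mem_Ici).le

end GlobalInitialValues

theorem stmt_13_general (s : ℝ) (hs : 0 < s) (P : ℝ → ℝ) (x₀ : ℝ) (hx₀ : 0 < x₀)
    (hcont : ContinuousOn P (Ici x₀)) (hmono : MonotoneOn P (Ici x₀)) (hpos : 0 < P x₀)
    (hlt : ∃ x ∈ Ici x₀, P x₀ < P x)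
    (hInt : IntegrableOn (fun z => P z / z ^ (1 + 2 / s)) (Ici x₀)) :
    ∃ γstar : ℝ, gammaC P x₀ < γstar ∧ ∀ γ₀ : ℝ,
      ((∃ γ : ℝ → ℝ, IsDSSolution s P γ (Ici x₀) ∧ γ x₀ = γ₀) ↔ γstar ≤ γ₀) := by
  have hclosed := isClosed_globalInitialValues hs hx₀ hcont hmono hpos
  have hupper := isUpperSet_globalInitialValues hs hx₀ hcont hmono hpos
  have hne := globalInitialValues_nonempty hs hx₀ hcont hInt
  have hIci : globalInitialValues s P x₀ = Ici (sInf (globalInitialValues s P x₀)) :=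
    hupper.upperClosure.symm.trans
      (upperClosure_eq_Ici_csInf hne bddBelow_globalInitialValues hclosed)
  refine ⟨sInf (globalInitialValues s P x₀), ?_, Set.ext_iff.1 hIci⟩
  obtain ⟨γ, hγ, hγ₀⟩ : sInf (globalInitialValues s P x₀) ∈ globalInitialValues s P x₀ :=
    hclosed.csInf_mem hne bddBelow_globalInitialValues
  obtain ⟨x, hx, hPx⟩ := hlt
  exact hγ₀ ▸ hγ.gammaC_lt_left hs hx₀ hmono hx hPx

theorem stmt_13 (s : ℝ) (hs : 0 < s) (P : ℝ → ℝ) (hP1 : H1 P) (hP2 : H2 P)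
    (x₀ : ℝ) (hx₀ : 0 < x₀)
    (hInt : MeasureTheory.IntegrableOn (fun z => P z / z ^ (1 + 2 / s)) (Set.Ici x₀)) :
    ∃ γstar : ℝ, gammaC P x₀ < γstar ∧
      ∀ γ₀ > (0 : ℝ),
        ((∃ γ : ℝ → ℝ, IsDSSolution s P γ (Set.Ici x₀) ∧ γ x₀ = γ₀) ↔ γstar ≤ γ₀) := by
  have hsub : Ici x₀ ⊆ Ici 0 := Ici_subset_Ici.2 hx₀.le
  have hlt : x₀ < x₀ + 1 := lt_add_one x₀
  obtain ⟨γstar, hγstar, hiff⟩ := stmt_13_general s hs P x₀ hx₀ (hP1.1.continuousOn.mono hsub)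
    (hP2.monotoneOn.mono hsub) (hP1.2.2 x₀ hx₀)
    ⟨x₀ + 1, hlt.le, hP2 hx₀.le (hx₀.trans hlt).le hlt⟩ hInt
  exact ⟨γstar, hγstar, fun γ₀ _ => hiff γ₀⟩
end
end

section
/- (Heteroclinic orbit of the running-coupling system.) Let s > 0 and let P satisfy H1 and H2. For each x* > 0 there exists a unique pair of differentiable functions x, γ₁ : ℝ → ℝ satisfying the system γ₁'(L) = γ₁(L) + γ₁(L)² − P(x(L)) and x'(L) = s·x(L)·γ₁(L) for all L ∈ ℝ, with x(0) = x* and γ₁(0) = 0. This solution satisfies x(L) > 0 for all L ∈ ℝ, and it is a heteroclinic orbit connecting the equilibria (0,0) and (0,−1): (x(L), γ₁(L)) → (0, 0) as L → −∞ and (x(L), γ₁(L)) → (0, −1) as L → +∞. -/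
open Real MeasureTheory Filter Set

noncomputable section

/-!
In the coordinates `(log X, γ₁)` the coupling is automatically positive. Since `P > 0`, the
field crosses `γ₁ = 0` downwards, so a solution starting there has `γ₁ ≤ 0` for positive times and
`γ₁ ≥ 0` for negative ones; hence `X` is largest at `L = 0`, `P ∘ X` is bounded, and further
barriers keep `γ₁` bounded, so that the solution is global. If `X` stayed away from `0` for `L ≥ 0`,
then `P ∘ X` would stay above some `m > 0`, and for large `b` the function `γ₁ + b log X + m L`
would be nonincreasing, which is impossible for bounded `γ₁` and `log X`; so `X → 0`, and reversing
time gives the same at `-∞`. At both ends `γ₁` therefore solves a scalar Riccati equation with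
vanishing forcing, whose equilibria are `0` and `-1`: backwards `0` is attracting, and forwards `γ₁`
is pushed strictly below `0` and tends to `-1`.
-/

open scoped NNReal Topology

theorem locallyLipschitzOn_comp {α β δ : Type*} [PseudoEMetricSpace α] [PseudoEMetricSpace β]
    [PseudoEMetricSpace δ] {g : β → δ} {f : α → β} {s : Set α} {t : Set β}
    (hg : LocallyLipschitzOn t g) (hf : LocallyLipschitzOn s f) (hst : MapsTo f s t) :
    LocallyLipschitzOn s (g ∘ f) := fun x hx => by
  obtain ⟨Kg, v, hv, hgv⟩ := hg (hst hx)
  obtain ⟨Kf, u, hu, hfu⟩ := hf hx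
  have hpre : f ⁻¹' v ∈ 𝓝[s] x := (hf.continuousOn x hx).tendsto_nhdsWithin hst hv
  exact ⟨Kg * Kf, u ∩ f ⁻¹' v, inter_mem hu hpre,
    hgv.comp (hfu.mono inter_subset_left) fun _ hy => hy.2⟩

section AutonomousODE

variable {E : Type*} [NormedAddCommGroup E] [NormedSpace ℝ E] {v : E → E}

theorem eqOn_of_hasDerivAt_of_locallyLipschitzOn {U : Set E} (hv : LocallyLipschitzOn U v)
    {I : Set ℝ} (hIo : IsOpen I) (hIc : IsPreconnected I) {f g : ℝ → E}
    (hf : ∀ t ∈ I, HasDerivAt f (v (f t)) t) (hfU : MapsTo f I U)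
    (hg : ∀ t ∈ I, HasDerivAt g (v (g t)) t) (hgU : MapsTo g I U)
    {t₀ : ℝ} (ht₀ : t₀ ∈ I) (h₀ : f t₀ = g t₀) : EqOn f g I := by
  have eventuallyEq_of_eq : ∀ t ∈ I, f t = g t → f =ᶠ[𝓝 t] g := fun t ht hfg => by
    obtain ⟨K, w, hw, hvw⟩ := hv (hfU ht)
    have stays : ∀ k : ℝ → E, (∀ r ∈ I, HasDerivAt k (v (k r)) r) → MapsTo k I U → k t = f t →
        ∀ᶠ r in 𝓝 t, HasDerivAt k (v (k r)) r ∧ k r ∈ w := fun k hk hkU hkt => by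
      have hkw : Tendsto k (𝓝 t) (𝓝[U] f t) := tendsto_nhdsWithin_iff.2
        ⟨hkt ▸ (hk t ht).continuousAt, eventually_of_mem (hIo.mem_nhds ht) hkU⟩
      exact (eventually_of_mem (hIo.mem_nhds ht) hk).and (hkw hw)
    exact ODE_solution_unique_of_eventually (v := fun _ => v) (s := fun _ => w)
      (.of_forall fun _ => hvw) (stays f hf hfU rfl) (stays g hg hgU hfg.symm) hfg
  have hsub : I ⊆ {t | f =ᶠ[𝓝 t] g} := by
    refine hIc.subset_of_closure_inter_subset isOpen_setOfPred_eventually_nhds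
      ⟨t₀, ht₀, eventuallyEq_of_eq t₀ ht₀ h₀⟩ fun t ⟨htc, ht⟩ => eventuallyEq_of_eq t ht ?_
    exact tendsto_nhds_unique_of_frequently_eq (hf t ht).continuousAt (hg t ht).continuousAt
      ((mem_closure_iff_frequently.1 htc).mono fun _ hr => EventuallyEq.eq_of_nhds hr)
  exact fun t ht => EventuallyEq.eq_of_nhds (hsub ht)

theorem exists_forall_hasDerivAt_of_forall_Ioo (hv : LocallyLipschitz v) {x₀ : E}
    (hloc : ∀ T > (0 : ℝ), ∃ α : ℝ → E, α 0 = x₀ ∧ ∀ t ∈ Ioo (-T) T, HasDerivAt α (v (α t)) t) :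
    ∃ α : ℝ → E, α 0 = x₀ ∧ ∀ t, HasDerivAt α (v (α t)) t := by
  choose! α hα₀ hα using hloc
  have agree : ∀ {S T : ℝ}, 0 < S → S ≤ T → EqOn (α S) (α T) (Ioo (-S) S) := fun {S T} hS hST =>
    eqOn_of_hasDerivAt_of_locallyLipschitzOn (locallyLipschitzOn_univ.2 hv) isOpen_Ioo
      isPreconnected_Ioo (hα S hS) (mapsTo_univ _ _)
      (fun t ht => hα T (hS.trans_le hST) t (Ioo_subset_Ioo (neg_le_neg hST) hST ht))
      (mapsTo_univ _ _) ⟨neg_lt_zero.2 hS, hS⟩ (by rw [hα₀ S hS, hα₀ T (hS.trans_le hST)])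
  have mem_Ioo_abs_add_one : ∀ t : ℝ, t ∈ Ioo (-(|t| + 1)) (|t| + 1) := fun t =>
    abs_lt.1 (lt_add_one _)
  refine ⟨fun t => α (|t| + 1) t, hα₀ _ (by positivity), fun t => ?_⟩
  have ht := mem_Ioo_abs_add_one t
  refine (hα (|t| + 1) (by positivity) t ht).congr_of_eventuallyEq ?_
  filter_upwards [Ioo_mem_nhds ht.1 ht.2] with r hr
  rcases le_total |r| |t| with hrt | htr
  · exact agree (by positivity) (by linarith) (mem_Ioo_abs_add_one r)
  · exact (agree (by positivity) (by linarith) hr).symm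

theorem exists_forall_hasDerivAt_of_locallyLipschitz_of_bounded [ProperSpace E] {M : ℝ≥0}
    (hv : LocallyLipschitz v) (hM : ∀ x, ‖v x‖ ≤ M) (x₀ : E) :
    ∃ α : ℝ → E, α 0 = x₀ ∧ ∀ t, HasDerivAt α (v (α t)) t := by
  refine exists_forall_hasDerivAt_of_forall_Ioo hv fun T hT => ?_
  obtain ⟨K, hK⟩ := hv.locallyLipschitzOn.exists_lipschitzOnWith_of_compact
    (isCompact_closedBall x₀ (M * T.toNNReal : ℝ≥0))
  have hPL : IsPicardLindelof (fun _ => v) (tmin := -T) (tmax := T)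
      ⟨0, by constructor <;> linarith⟩ x₀ (M * T.toNNReal) 0 M K :=
    { lipschitzOnWith := fun _ _ => hK
      continuousOn := fun _ _ => continuousOn_const
      norm_le := fun _ _ x _ => hM x
      mul_max_le := by simp [hT.le] }
  obtain ⟨α, hα₀, hα⟩ := hPL.exists_eq_forall_mem_Icc_hasDerivWithinAt₀
  exact ⟨α, hα₀, fun t ht =>
    (hα t (Ioo_subset_Icc_self ht)).hasDerivAt (Icc_mem_nhds ht.1 ht.2)⟩

end AutonomousODE

section ScalarInequalities

variable {f f' : ℝ → ℝ} {t₀ : ℝ}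

theorem hasDerivAt_comp_neg {d t : ℝ} (hf : HasDerivAt f d (-t)) :
    HasDerivAt (fun r => f (-r)) (-d) t :=
  (hf.comp t (hasDerivAt_neg t)).congr_deriv (mul_neg_one d)

theorem antitoneOn_Ici_of_hasDerivAt_nonpos (hf : ∀ t ≥ t₀, HasDerivAt f (f' t) t)
    (hf' : ∀ t ≥ t₀, f' t ≤ 0) : AntitoneOn f (Ici t₀) :=
  antitoneOn_of_hasDerivWithinAt_nonpos (convex_Ici t₀)
    (fun t ht => (hf t ht).continuousAt.continuousWithinAt)
    (fun t ht => (hf t (interior_subset ht)).hasDerivWithinAt)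
    (fun t ht => hf' t (interior_subset ht))

theorem monotoneOn_Iic_of_hasDerivAt_nonneg (hf : ∀ t ≤ t₀, HasDerivAt f (f' t) t)
    (hf' : ∀ t ≤ t₀, 0 ≤ f' t) : MonotoneOn f (Iic t₀) :=
  monotoneOn_of_hasDerivWithinAt_nonneg (convex_Iic t₀)
    (fun t ht => (hf t ht).continuousAt.continuousWithinAt)
    (fun t ht => (hf t (mem_Iic.1 (interior_subset ht))).hasDerivWithinAt)
    (fun t ht => hf' t (mem_Iic.1 (interior_subset ht)))

theorem le_of_hasDerivAt_of_eq_imp_neg {b : ℝ} (hf : ∀ t ≥ t₀, HasDerivAt f (f' t) t)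
    (h₀ : f t₀ ≤ b) (hb : ∀ t ≥ t₀, f t = b → f' t < 0) {t : ℝ} (ht : t₀ ≤ t) : f t ≤ b :=
  image_le_of_deriv_right_lt_deriv_boundary (a := t₀) (b := t) (B := fun _ => b)
    (fun r hr => (hf r hr.1).continuousAt.continuousWithinAt)
    (fun r hr => (hf r hr.1).hasDerivWithinAt) h₀ (fun r => hasDerivAt_const r b)
    (fun r hr => hb r hr.1) (right_mem_Icc.2 ht)

theorem mem_Icc_of_hasDerivAt_of_inward {a b : ℝ} (hf : ∀ t ≥ t₀, HasDerivAt f (f' t) t)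
    (h₀ : f t₀ ∈ Icc a b) (ha : ∀ t ≥ t₀, f t = a → 0 < f' t)
    (hb : ∀ t ≥ t₀, f t = b → f' t < 0) {t : ℝ} (ht : t₀ ≤ t) : f t ∈ Icc a b := by
  refine ⟨neg_le_neg_iff.1 ?_, le_of_hasDerivAt_of_eq_imp_neg hf h₀.2 hb ht⟩
  exact le_of_hasDerivAt_of_eq_imp_neg (fun r hr => (hf r hr).neg) (neg_le_neg h₀.1)
    (fun r hr hra => neg_lt_zero.2 (ha r hr (neg_injective hra))) ht

theorem eq_mul_exp_integral_of_hasDerivAt {a : ℝ → ℝ} (ha : Continuous a)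
    (hf : ∀ t, HasDerivAt f (a t * f t) t) (t : ℝ) :
    f t = f t₀ * Real.exp (∫ r in t₀..t, a r) := by
  have hexp : ∀ t, HasDerivAt (fun t => Real.exp (-∫ r in t₀..t, a r))
      (Real.exp (-∫ r in t₀..t, a r) * -a t) t := fun t =>
    (intervalIntegral.integral_hasDerivAt_right (ha.intervalIntegrable _ _)
      (ha.stronglyMeasurableAtFilter _ _) ha.continuousAt).neg.exp
  have hderiv : ∀ t, HasDerivAt (fun t => f t * Real.exp (-∫ r in t₀..t, a r)) 0 t := fun t =>
    ((hf t).mul (hexp t)).congr_deriv (by ring)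
  have hconst : f t * Real.exp (-∫ r in t₀..t, a r) = f t₀ := by
    simpa using is_const_of_deriv_eq_zero (fun t => (hderiv t).differentiableAt)
      (fun t => (hderiv t).deriv) t t₀
  rw [← hconst, mul_assoc, ← Real.exp_add, neg_add_cancel, Real.exp_zero, mul_one]

theorem tendsto_gronwallBound_atTop {δ K ε : ℝ} (hK : K < 0) :
    Tendsto (gronwallBound δ K ε) atTop (𝓝 (-ε / K)) := by
  have hexp : Tendsto (fun t => Real.exp (K * t)) atTop (𝓝 0) :=
    Real.tendsto_exp_atBot.comp (tendsto_id.const_mul_atTop_of_neg hK)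
  have hlim := (hexp.const_mul δ).add ((hexp.sub_const 1).const_mul (ε / K))
  rw [gronwallBound_of_K_ne_0 hK.ne]
  convert hlim using 2
  ring

theorem tendsto_zero_of_deriv_le_neg_mul_add {p : ℝ → ℝ} {a : ℝ} (ha : 0 < a)
    (hf : ∀ t ≥ t₀, HasDerivAt f (f' t) t) (hf₀ : ∀ t ≥ t₀, 0 ≤ f t)
    (hle : ∀ t ≥ t₀, f' t ≤ -a * f t + p t) (hp : Tendsto p atTop (𝓝 0)) :
    Tendsto f atTop (𝓝 0) := by
  refine tendsto_order.2 ⟨fun b hb => ?_, fun ε hε => ?_⟩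
  · filter_upwards [eventually_ge_atTop t₀] with t ht using hb.trans_le (hf₀ t ht)
  obtain ⟨T, hT⟩ := eventually_atTop.1 ((hp.eventually_le_const
    (show 0 < a * (ε / 2) by positivity)).and (eventually_ge_atTop t₀))
  have hT₀ : ∀ t ≥ T, t₀ ≤ t := fun t ht => (hT t ht).2
  have hbound : ∀ t ≥ T, f t ≤ gronwallBound (f T) (-a) (a * (ε / 2)) (t - T) := fun t ht =>
    le_gronwallBound_of_liminf_deriv_right_le
      (fun r hr => (hf r (hT₀ r hr.1)).continuousAt.continuousWithinAt)
      (fun r hr _ => (hf r (hT₀ r hr.1)).hasDerivWithinAt.liminf_right_slope_le) le_rfl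
      (fun r hr => (hle r (hT₀ r hr.1)).trans (by linarith [(hT r hr.1).1])) t (right_mem_Icc.2 ht)
  have hlim : Tendsto (gronwallBound (f T) (-a) (a * (ε / 2))) atTop (𝓝 (ε / 2)) := by
    convert tendsto_gronwallBound_atTop (δ := f T) (ε := a * (ε / 2)) (neg_lt_zero.2 ha) using 2
    field_simp
  have hshift : Tendsto (fun t => t - T) atTop atTop :=
    tendsto_atTop_add_const_right atTop (-T) tendsto_id
  filter_upwards [hshift.eventually (hlim.eventually_lt_const (half_lt_self hε)),
    eventually_ge_atTop T] with t ht hTt using (hbound t hTt).trans_lt ht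

end ScalarInequalities

section Riccati

variable {h p : ℝ → ℝ} {t₀ C : ℝ}

theorem tendsto_zero_of_riccati (hh : ∀ t ≥ t₀, HasDerivAt h (-h t + h t ^ 2 - p t) t)
    (hh₀ : ∀ t ≥ t₀, h t ≤ 0) (hp : Tendsto p atTop (𝓝 0)) : Tendsto h atTop (𝓝 0) := by
  have hlim : Tendsto (fun t => -h t) atTop (𝓝 0) :=
    tendsto_zero_of_deriv_le_neg_mul_add one_pos (fun t ht => (hh t ht).neg)
      (fun t ht => neg_nonneg.2 (hh₀ t ht)) (fun t _ => by linarith [sq_nonneg (h t)]) hp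
  simpa using hlim.neg

theorem lt_zero_of_riccati (hh : ∀ t ≥ t₀, HasDerivAt h (h t + h t ^ 2 - p t) t)
    (hh₀ : ∀ t ≥ t₀, h t ≤ 0) (hp : ∀ t ≥ t₀, 0 < p t) {t : ℝ} (ht : t₀ < t) : h t < 0 := by
  refine (hh₀ t ht.le).lt_of_ne fun hzero => ?_
  have hmax : IsLocalMax h t := by
    filter_upwards [lt_mem_nhds ht] with r hr using hzero ▸ hh₀ r hr.le
  have hderiv := hmax.hasDerivAt_eq_zero (hh t ht.le)
  rw [hzero] at hderiv
  linarith [hp t ht.le]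

theorem exists_forall_le_neg_of_riccati (hh : ∀ t ≥ t₀, HasDerivAt h (h t + h t ^ 2 - p t) t)
    (hh₀ : h t₀ < 0) (hp : ∀ t ≥ t₀, 0 < p t) : ∃ δ > 0, ∀ t ≥ t₀, h t ≤ -δ := by
  obtain ⟨δ, hδ₀, hδ⟩ : ∃ δ > 0, δ ≤ min 1 (-h t₀) :=
    ⟨min 1 (-h t₀), lt_min one_pos (neg_pos.2 hh₀), le_rfl⟩
  obtain ⟨hδ₁, hδh⟩ := le_min_iff.1 hδ
  refine ⟨δ, hδ₀, fun t ht => le_of_hasDerivAt_of_eq_imp_neg hh (by linarith)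
    (fun r hr hrδ => ?_) ht⟩
  rw [hrδ]
  nlinarith [hp r hr]

theorem tendsto_neg_one_of_riccati (hh : ∀ t ≥ t₀, HasDerivAt h (h t + h t ^ 2 - p t) t)
    (hhC : ∀ t ≥ t₀, h t ∈ Icc (-C) 0) (hp₀ : ∀ t ≥ t₀, 0 < p t) (hp : Tendsto p atTop (𝓝 0)) :
    Tendsto h atTop (𝓝 (-1)) := by
  have hle : t₀ ≤ t₀ + 1 := (lt_add_one t₀).le
  have hh' : ∀ t ≥ t₀ + 1, HasDerivAt h (h t + h t ^ 2 - p t) t := fun t ht => hh t (hle.trans ht)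
  obtain ⟨δ, hδ, hhδ⟩ := exists_forall_le_neg_of_riccati hh'
    (lt_zero_of_riccati hh (fun t ht => (hhC t ht).2) hp₀ (lt_add_one t₀))
    fun t ht => hp₀ t (hle.trans ht)
  -- `((h + 1)²)' = 2 h (h + 1)² - 2 (h + 1) p`, and `h ≤ -δ` makes the first term damping.
  have hsq : Tendsto (fun t => (h t + 1) ^ 2) atTop (𝓝 0) := by
    refine tendsto_zero_of_deriv_le_neg_mul_add (p := fun t => 2 * C * p t) (mul_pos two_pos hδ)
      (fun t ht => ((hh' t ht).add_const 1).pow 2) (fun t _ => sq_nonneg _) (fun t ht => ?_)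
      (by simpa using hp.const_mul (2 * C))
    have hdamp := mul_nonneg (sub_nonneg.2 (hhδ t ht)) (sq_nonneg (h t + 1))
    have hforce : 0 ≤ (h t + 1 + C) * p t :=
      mul_nonneg (by linarith [(hhC t (hle.trans ht)).1]) (hp₀ t (hle.trans ht)).le
    simp only [Nat.cast_ofNat, Nat.add_one_sub_one, pow_one]
    linarith
  have habs : Tendsto (fun t => |h t + 1|) atTop (𝓝 0) := by
    simpa only [Real.sqrt_sq_eq_abs, Real.sqrt_zero] using hsq.sqrt
  simpa using ((tendsto_zero_iff_abs_tendsto_zero _).2 habs).sub_const 1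

theorem exists_forall_hasDerivAt_truncated_riccati {Q : ℝ → ℝ} {a b M : ℝ} (hab : a ≤ b)
    (hQ : LocallyLipschitz Q) (hQM : ∀ u, Q u ∈ Icc 0 M) (s u₀ g₀ : ℝ) :
    ∃ u g : ℝ → ℝ, u 0 = u₀ ∧ g 0 = g₀ ∧
      (∀ t, HasDerivAt u (s * (projIcc a b hab (g t) : ℝ)) t) ∧
      ∀ t, HasDerivAt g
        ((projIcc a b hab (g t) : ℝ) + (projIcc a b hab (g t) : ℝ) ^ 2 - Q (u t)) t := by
  set w : ℝ × ℝ → ℝ × ℝ := fun p => (s * p.1, p.1 + p.1 ^ 2 - p.2)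
  have hw : ContDiff ℝ 1 w := by fun_prop
  have hproj : LipschitzWith (1 * 1) fun y => (projIcc a b hab y : ℝ) :=
    (LipschitzWith.subtype_val _).comp (LipschitzWith.projIcc hab)
  have hv : LocallyLipschitz (w ∘ fun p : ℝ × ℝ => ((projIcc a b hab p.2 : ℝ), Q p.1)) :=
    hw.locallyLipschitz.comp
      ((hproj.locallyLipschitz.comp LipschitzWith.prod_snd.locallyLipschitz).prodMk
        (hQ.comp LipschitzWith.prod_fst.locallyLipschitz))
  obtain ⟨B, hB⟩ := (isCompact_Icc (a := a) (b := b)).prod (isCompact_Icc (a := 0) (b := M))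
    |>.exists_bound_of_continuousOn hw.continuous.continuousOn
  obtain ⟨α, hα₀, hα⟩ := exists_forall_hasDerivAt_of_locallyLipschitz_of_bounded hv
    (fun p => (hB _ ⟨(projIcc a b hab p.2).2, hQM p.1⟩).trans (Real.le_coe_toNNReal B)) (u₀, g₀)
  exact ⟨fun t => (α t).1, fun t => (α t).2, congrArg Prod.fst hα₀, congrArg Prod.snd hα₀,
    fun t => (hα t).fst, fun t => (hα t).snd⟩

/-- Truncating `g` to `[-(M + 1), M + 1]` makes the field bounded; at the ends of
`[-(M + 1), 0]` for positive times, and of `[0, M + 1]` for negative ones, it points inwards, so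
the truncation is never active. -/
theorem exists_forall_hasDerivAt_riccati {Q : ℝ → ℝ} {M : ℝ} (hQ : LocallyLipschitz Q)
    (hQ₀ : ∀ u, 0 < Q u) (hQM : ∀ u, Q u ≤ M) (s u₀ : ℝ) :
    ∃ u g : ℝ → ℝ, u 0 = u₀ ∧ g 0 = 0 ∧ (∀ t, HasDerivAt u (s * g t) t) ∧
      (∀ t, HasDerivAt g (g t + g t ^ 2 - Q (u t)) t) ∧
      (∀ t ≥ 0, g t ∈ Icc (-(M + 1)) 0) ∧ ∀ t ≤ 0, g t ∈ Icc 0 (M + 1) := by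
  have hM : 0 < M := (hQ₀ 0).trans_le (hQM 0)
  have hneg : -(M + 1) ≤ 0 := by linarith
  have hpos : 0 ≤ M + 1 := by linarith
  obtain ⟨u, g, hu₀, hg₀, hu, hg⟩ := exists_forall_hasDerivAt_truncated_riccati
    (hneg.trans hpos) hQ (fun u => ⟨(hQ₀ u).le, hQM u⟩) s u₀ 0
  have forward : ∀ t ≥ 0, g t ∈ Icc (-(M + 1)) 0 := fun t =>
    mem_Icc_of_hasDerivAt_of_inward (fun r _ => hg r) (hg₀.symm ▸ ⟨hneg, le_rfl⟩)
      (fun r _ hr => by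
        rw [hr, projIcc_left]
        nlinarith [hQM (u r)])
      (fun r _ hr => by
        rw [hr, projIcc_of_mem _ ⟨hneg, hpos⟩]
        linarith [hQ₀ (u r)])
  have backward : ∀ t ≤ 0, g t ∈ Icc 0 (M + 1) := fun t ht => by
    simpa only [neg_neg] using mem_Icc_of_hasDerivAt_of_inward (f := fun r => g (-r))
      (fun r _ => hasDerivAt_comp_neg (hg (-r)))
      (by simpa only [neg_zero, hg₀] using ⟨le_rfl, hpos⟩)
      (fun r _ hr => by
        rw [hr, projIcc_of_mem _ ⟨hneg, hpos⟩]
        linarith [hQ₀ (u (-r))])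
      (fun r _ hr => by
        rw [hr, projIcc_right]
        nlinarith [hQM (u (-r))])
      (neg_nonneg.2 ht)
  have projIcc_eq : ∀ t, (projIcc _ _ (hneg.trans hpos) (g t) : ℝ) = g t := fun t => by
    rcases le_total 0 t with ht | ht
    · rw [projIcc_of_mem _ (Icc_subset_Icc_right hpos (forward t ht))]
    · rw [projIcc_of_mem _ (Icc_subset_Icc_left hneg (backward t ht))]
  simp only [projIcc_eq] at hu hg
  exact ⟨u, g, hu₀, hg₀, hu, hg, forward, backward⟩

end Riccati

theorem locallyLipschitzOn_runningCouplingField {P : ℝ → ℝ} {S : Set ℝ} (s σ : ℝ)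
    (hP : LocallyLipschitzOn S P) :
    LocallyLipschitzOn (S ×ˢ univ) fun p : ℝ × ℝ =>
      (s * p.1 * p.2, σ * p.2 + p.2 ^ 2 - P p.1) := by
  have hpoly : ContDiff ℝ 1 fun p : ℝ × ℝ => (s * p.1 * p.2, σ * p.2 + p.2 ^ 2) := by fun_prop
  have hPfst : LocallyLipschitzOn (S ×ˢ (univ : Set ℝ)) fun p : ℝ × ℝ => P p.1 :=
    locallyLipschitzOn_comp hP LipschitzWith.prod_fst.locallyLipschitz.locallyLipschitzOn
      fun _ hp => hp.1
  have hinr : LocallyLipschitzOn (S ×ˢ univ) fun p : ℝ × ℝ => ((0 : ℝ), P p.1) :=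
    locallyLipschitzOn_comp (LocallyLipschitz.prodMk_left 0).locallyLipschitzOn hPfst
      (mapsTo_univ _ _)
  simpa using hpoly.locallyLipschitz.locallyLipschitzOn.sub hinr

/-- `(X, γ)` solves the running-coupling system `γ' = σ γ + γ² - P(X)`, `X' = s X γ` for all
values of the scale variable. The system itself is the case `σ = 1`; the substitution
`(L, γ) ↦ (-L, -γ)` turns `σ` into `-σ`, so `σ = -1` describes its orbits traversed backwards. -/
structure IsRunningCouplingSolution (s σ : ℝ) (P X γ : ℝ → ℝ) : Prop where
  hasDerivAt_anomalousDim : ∀ L, HasDerivAt γ (σ * γ L + γ L ^ 2 - P (X L)) L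
  hasDerivAt_coupling : ∀ L, HasDerivAt X (s * X L * γ L) L

namespace IsRunningCouplingSolution

variable {s σ C : ℝ} {P X γ Y η : ℝ → ℝ}

theorem comp_neg (h : IsRunningCouplingSolution s σ P X γ) :
    IsRunningCouplingSolution s (-σ) P (fun L => X (-L)) (fun L => -γ (-L)) where
  hasDerivAt_anomalousDim L :=
    (hasDerivAt_comp_neg (h.hasDerivAt_anomalousDim (-L))).neg.congr_deriv (by ring)
  hasDerivAt_coupling L :=
    (hasDerivAt_comp_neg (h.hasDerivAt_coupling (-L))).congr_deriv (by ring)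

theorem coupling_pos (h : IsRunningCouplingSolution s σ P X γ) (hX₀ : 0 < X 0) (L : ℝ) :
    0 < X L := by
  have hγ : Continuous γ :=
    continuous_iff_continuousAt.2 fun L => (h.hasDerivAt_anomalousDim L).continuousAt
  rw [eq_mul_exp_integral_of_hasDerivAt (t₀ := 0) (hγ.const_mul s)
    (fun L => (h.hasDerivAt_coupling L).congr_deriv (by ring)) L]
  exact mul_pos hX₀ (Real.exp_pos _)

theorem unique (hP : LocallyLipschitzOn (Ioi 0) P) (h : IsRunningCouplingSolution s σ P X γ)
    (h' : IsRunningCouplingSolution s σ P Y η) (hX₀ : 0 < X 0) (hXY : X 0 = Y 0)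
    (hγη : γ 0 = η 0) : X = Y ∧ γ = η := by
  have hEq : EqOn (fun L => (X L, γ L)) (fun L => (Y L, η L)) univ :=
    eqOn_of_hasDerivAt_of_locallyLipschitzOn (locallyLipschitzOn_runningCouplingField s σ hP)
      isOpen_univ isPreconnected_univ
      (fun L _ => (h.hasDerivAt_coupling L).prodMk (h.hasDerivAt_anomalousDim L))
      (fun L _ => ⟨h.coupling_pos hX₀ L, mem_univ _⟩)
      (fun L _ => (h'.hasDerivAt_coupling L).prodMk (h'.hasDerivAt_anomalousDim L))
      (fun L _ => ⟨h'.coupling_pos (hXY ▸ hX₀) L, mem_univ _⟩) (mem_univ 0) (Prod.ext hXY hγη)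
  exact ⟨funext fun L => congrArg Prod.fst (hEq (mem_univ L)),
    funext fun L => congrArg Prod.snd (hEq (mem_univ L))⟩

theorem antitoneOn_coupling (h : IsRunningCouplingSolution s σ P X γ) (hs : 0 < s)
    (hX₀ : 0 < X 0) (hγ : ∀ L ≥ 0, γ L ≤ 0) : AntitoneOn X (Ici 0) :=
  antitoneOn_Ici_of_hasDerivAt_nonpos (fun L _ => h.hasDerivAt_coupling L) fun L hL =>
    mul_nonpos_of_nonneg_of_nonpos (mul_pos hs (h.coupling_pos hX₀ L)).le (hγ L hL)

/-- For `b` large the derivative of `γ + b log X + m L` is at most `γ (γ + C) ≤ 0`. -/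
theorem exists_antitoneOn_lyapunov (h : IsRunningCouplingSolution s σ P X γ) (hs : 0 < s)
    (hX₀ : 0 < X 0) (hγ : ∀ L ≥ 0, γ L ∈ Icc (-C) 0) {m : ℝ} (hm : ∀ L ≥ 0, m ≤ P (X L)) :
    ∃ b ≥ 0, AntitoneOn (fun L => γ L + b * Real.log (X L) + m * L) (Ici 0) := by
  refine ⟨(|C| + |σ|) / s, by positivity, antitoneOn_Ici_of_hasDerivAt_nonpos
    (f' := fun L => σ * γ L + γ L ^ 2 - P (X L) + (|C| + |σ|) * γ L + m) (fun L _ => ?_)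
    fun L hL => ?_⟩
  · have hX := h.coupling_pos hX₀ L
    refine (((h.hasDerivAt_anomalousDim L).add (((h.hasDerivAt_coupling L).log hX.ne').const_mul
      ((|C| + |σ|) / s))).add ((hasDerivAt_id L).const_mul m)).congr_deriv ?_
    field_simp
  · have hfactor : 0 ≤ γ L + (|C| + |σ| + σ) := by
      linarith [(hγ L hL).1, le_abs_self C, neg_abs_le σ]
    linarith [mul_nonpos_of_nonpos_of_nonneg (hγ L hL).2 hfactor, hm L hL]

theorem exists_coupling_lt (h : IsRunningCouplingSolution s σ P X γ) (hs : 0 < s)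
    (hP : ContinuousOn P (Ioi 0)) (hPpos : ∀ x > 0, 0 < P x) (hX₀ : 0 < X 0)
    (hγ : ∀ L ≥ 0, γ L ∈ Icc (-C) 0) {ε : ℝ} (hε : 0 < ε) : ∃ L ≥ 0, X L < ε := by
  by_contra! hεX
  have hanti := h.antitoneOn_coupling hs hX₀ fun L hL => (hγ L hL).2
  obtain ⟨m, hm₀, hm⟩ : ∃ m, 0 < m ∧ ∀ x ∈ Icc ε (X 0), m ≤ P x :=
    isCompact_Icc.exists_forall_le' (hP.mono fun x hx => hε.trans_le hx.1)
      fun x hx => hPpos x (hε.trans_le hx.1)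
  obtain ⟨b, hb, hlyap⟩ := h.exists_antitoneOn_lyapunov hs hX₀ hγ
    fun L hL => hm (X L) ⟨hεX L hL, hanti self_mem_Ici hL hL⟩
  have hbound : ∀ L ≥ 0, m * L ≤ γ 0 + b * Real.log (X 0) + C - b * Real.log ε := fun L hL => by
    have hlog := mul_le_mul_of_nonneg_left (Real.log_le_log hε (hεX L hL)) hb
    have hdecr : γ L + b * Real.log (X L) + m * L ≤ γ 0 + b * Real.log (X 0) + m * 0 :=
      hlyap self_mem_Ici hL hL
    linarith [(hγ L hL).1]
  obtain ⟨L, hL, hL₀⟩ := (((tendsto_id.const_mul_atTop hm₀).eventually_gt_atTop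
    (γ 0 + b * Real.log (X 0) + C - b * Real.log ε)).and (eventually_ge_atTop 0)).exists
  exact (hbound L hL₀).not_gt hL

theorem tendsto_coupling_atTop (h : IsRunningCouplingSolution s σ P X γ) (hs : 0 < s)
    (hP : ContinuousOn P (Ioi 0)) (hPpos : ∀ x > 0, 0 < P x) (hX₀ : 0 < X 0)
    (hγ : ∀ L ≥ 0, γ L ∈ Icc (-C) 0) : Tendsto X atTop (𝓝 0) := by
  refine tendsto_order.2 ⟨fun b hb => .of_forall fun L => hb.trans (h.coupling_pos hX₀ L),
    fun ε hε => ?_⟩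
  obtain ⟨T, hT₀, hT⟩ := h.exists_coupling_lt hs hP hPpos hX₀ hγ hε
  filter_upwards [eventually_ge_atTop T] with L hL
  exact (h.antitoneOn_coupling hs hX₀ (fun L hL => (hγ L hL).2) hT₀ (hT₀.trans hL) hL).trans_lt hT

theorem exists_of_locallyLipschitzOn (hs : 0 < s) (hP : ContinuousOn P (Ici 0))
    (hPL : LocallyLipschitzOn (Ioi 0) P) (hPpos : ∀ x > 0, 0 < P x) {x₀ : ℝ} (hx₀ : 0 < x₀) :
    ∃ X γ C, IsRunningCouplingSolution s 1 P X γ ∧ X 0 = x₀ ∧ γ 0 = 0 ∧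
      (∀ L ≥ 0, γ L ∈ Icc (-C) 0) ∧ ∀ L ≤ 0, γ L ∈ Icc 0 C := by
  set x : ℝ → ℝ := fun u => Real.exp (min u (Real.log x₀))
  have hx : ∀ u, x u ∈ Ioc 0 x₀ := fun u => ⟨Real.exp_pos _,
    (Real.exp_le_exp.2 (min_le_right _ _)).trans_eq (Real.exp_log hx₀)⟩
  have hxL : LocallyLipschitz x :=
    (Real.contDiff_exp (n := 1)).locallyLipschitz.comp (LocallyLipschitz.id.min_const _)
  have hPx : LocallyLipschitz (P ∘ x) := locallyLipschitzOn_univ.1 <|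
    locallyLipschitzOn_comp hPL hxL.locallyLipschitzOn fun u _ => (hx u).1
  obtain ⟨M, hM⟩ := isCompact_Icc.exists_bound_of_continuousOn
    (hP.mono (Icc_subset_Ici_self : Icc 0 x₀ ⊆ Ici 0))
  obtain ⟨u, γ, hu₀, hγ₀, hu, hγ, hpos, hneg⟩ := exists_forall_hasDerivAt_riccati hPx
    (fun u => hPpos _ (hx u).1)
    (fun u => (Real.le_norm_self _).trans (hM (x u) (Ioc_subset_Icc_self (hx u)))) s (Real.log x₀)
  have hu_le : ∀ L, u L ≤ Real.log x₀ := fun L => by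
    rw [← hu₀]
    rcases le_total 0 L with hL | hL
    · exact antitoneOn_Ici_of_hasDerivAt_nonpos (fun L _ => hu L)
        (fun L hL => mul_nonpos_of_nonneg_of_nonpos hs.le (hpos L hL).2) self_mem_Ici hL hL
    · exact monotoneOn_Iic_of_hasDerivAt_nonneg (fun L _ => hu L)
        (fun L hL => mul_nonneg hs.le (hneg L hL).1) hL self_mem_Iic hL
  have hx_eq : ∀ L, x (u L) = Real.exp (u L) := fun L => by
    simp only [x, min_eq_left (hu_le L)]
  refine ⟨fun L => Real.exp (u L), γ, M + 1, ⟨fun L => ?_, fun L => ?_⟩,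
    by simp only [hu₀, Real.exp_log hx₀], hγ₀, hpos, hneg⟩
  · exact (hγ L).congr_deriv (by rw [Function.comp_apply, hx_eq, one_mul])
  · exact (hu L).exp.congr_deriv (by ring)

theorem tendsto_comp_coupling_atTop (h : IsRunningCouplingSolution s σ P X γ) (hs : 0 < s)
    (hP : ContinuousOn P (Ici 0)) (hP₀ : P 0 = 0) (hPpos : ∀ x > 0, 0 < P x) (hX₀ : 0 < X 0)
    (hγ : ∀ L ≥ 0, γ L ∈ Icc (-C) 0) : Tendsto (fun L => P (X L)) atTop (𝓝 0) := by
  have hX := h.tendsto_coupling_atTop hs (hP.mono Ioi_subset_Ici_self) hPpos hX₀ hγ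
  have hXIci : Tendsto X atTop (𝓝[Ici 0] 0) := tendsto_nhdsWithin_iff.2
    ⟨hX, .of_forall fun L => (h.coupling_pos hX₀ L).le⟩
  simpa only [hP₀, Function.comp_def] using (hP 0 self_mem_Ici).tendsto.comp hXIci

theorem tendsto_atTop_nhds_zero_neg_one (h : IsRunningCouplingSolution s 1 P X γ) (hs : 0 < s)
    (hP : ContinuousOn P (Ici 0)) (hP₀ : P 0 = 0) (hPpos : ∀ x > 0, 0 < P x) (hX₀ : 0 < X 0)
    (hγ : ∀ L ≥ 0, γ L ∈ Icc (-C) 0) :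
    Tendsto (fun L => (X L, γ L)) atTop (𝓝 (0, -1)) := by
  refine (h.tendsto_coupling_atTop hs (hP.mono Ioi_subset_Ici_self) hPpos hX₀ hγ).prodMk_nhds ?_
  exact tendsto_neg_one_of_riccati
    (fun L _ => (h.hasDerivAt_anomalousDim L).congr_deriv (by rw [one_mul])) hγ
    (fun L _ => hPpos _ (h.coupling_pos hX₀ L))
    (h.tendsto_comp_coupling_atTop hs hP hP₀ hPpos hX₀ hγ)

theorem tendsto_atBot_nhds_zero (h : IsRunningCouplingSolution s 1 P X γ) (hs : 0 < s)
    (hP : ContinuousOn P (Ici 0)) (hP₀ : P 0 = 0) (hPpos : ∀ x > 0, 0 < P x) (hX₀ : 0 < X 0)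
    (hγ : ∀ L ≤ 0, γ L ∈ Icc 0 C) :
    Tendsto (fun L => (X L, γ L)) atBot (𝓝 (0, 0)) := by
  have hX₀' : 0 < X (-0) := by rwa [neg_zero]
  have hγ' : ∀ L ≥ 0, -γ (-L) ∈ Icc (-C) 0 := fun L hL =>
    have hmem := hγ (-L) (neg_nonpos.2 hL)
    ⟨neg_le_neg hmem.2, neg_nonpos.2 hmem.1⟩
  have hX := h.comp_neg.tendsto_coupling_atTop hs (hP.mono Ioi_subset_Ici_self) hPpos hX₀' hγ'
  have hγlim : Tendsto (fun L => -γ (-L)) atTop (𝓝 0) := tendsto_zero_of_riccati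
    (fun L _ => (h.comp_neg.hasDerivAt_anomalousDim L).congr_deriv (by rw [neg_one_mul]))
    (fun L hL => (hγ' L hL).2) (h.comp_neg.tendsto_comp_coupling_atTop hs hP hP₀ hPpos hX₀' hγ')
  simpa only [Function.comp_def, neg_neg, neg_zero] using
    (hX.prodMk_nhds hγlim.neg).comp tendsto_neg_atBot_atTop

end IsRunningCouplingSolution

theorem stmt_18_general (s : ℝ) (hs : 0 < s) (P : ℝ → ℝ) (hP : ContinuousOn P (Ici 0))
    (hPL : LocallyLipschitzOn (Ioi 0) P) (hP₀ : P 0 = 0) (hPpos : ∀ x > 0, 0 < P x)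
    (xstar : ℝ) (hxstar : 0 < xstar) :
    ∃ X γ₁ : ℝ → ℝ,
      ((∀ L : ℝ, HasDerivAt γ₁ (γ₁ L + (γ₁ L) ^ 2 - P (X L)) L ∧
          HasDerivAt X (s * X L * γ₁ L) L) ∧ X 0 = xstar ∧ γ₁ 0 = 0) ∧
      (∀ X' γ₁' : ℝ → ℝ,
        ((∀ L : ℝ, HasDerivAt γ₁' (γ₁' L + (γ₁' L) ^ 2 - P (X' L)) L ∧
            HasDerivAt X' (s * X' L * γ₁' L) L) ∧ X' 0 = xstar ∧ γ₁' 0 = 0) →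
        X' = X ∧ γ₁' = γ₁) ∧
      (∀ L : ℝ, 0 < X L) ∧
      Filter.Tendsto (fun L => (X L, γ₁ L)) Filter.atBot (nhds (0, 0)) ∧
      Filter.Tendsto (fun L => (X L, γ₁ L)) Filter.atTop (nhds (0, -1)) := by
  obtain ⟨X, γ, C, h, hX₀, hγ₀, hγpos, hγneg⟩ :=
    IsRunningCouplingSolution.exists_of_locallyLipschitzOn hs hP hPL hPpos hxstar
  have hX₀pos : 0 < X 0 := hX₀ ▸ hxstar
  refine ⟨X, γ, ⟨fun L => ⟨?_, h.hasDerivAt_coupling L⟩, hX₀, hγ₀⟩, ?_, h.coupling_pos hX₀pos,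
    h.tendsto_atBot_nhds_zero hs hP hP₀ hPpos hX₀pos hγneg,
    h.tendsto_atTop_nhds_zero_neg_one hs hP hP₀ hPpos hX₀pos hγpos⟩
  · simpa only [one_mul] using h.hasDerivAt_anomalousDim L
  rintro X' γ' ⟨h', hX'₀, hγ'₀⟩
  have hsol' : IsRunningCouplingSolution s 1 P X' γ' :=
    ⟨fun L => by simpa only [one_mul] using (h' L).1, fun L => (h' L).2⟩
  exact hsol'.unique hPL h (hX'₀ ▸ hxstar) (hX'₀.trans hX₀.symm) (hγ'₀.trans hγ₀.symm)

theorem stmt_18 (s : ℝ) (hs : 0 < s) (P : ℝ → ℝ) (hP1 : H1 P) (hP2 : H2 P)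
    (xstar : ℝ) (hxstar : 0 < xstar) :
    ∃ X γ₁ : ℝ → ℝ,
      ((∀ L : ℝ, HasDerivAt γ₁ (γ₁ L + (γ₁ L) ^ 2 - P (X L)) L ∧
          HasDerivAt X (s * X L * γ₁ L) L) ∧ X 0 = xstar ∧ γ₁ 0 = 0) ∧
      (∀ X' γ₁' : ℝ → ℝ,
        ((∀ L : ℝ, HasDerivAt γ₁' (γ₁' L + (γ₁' L) ^ 2 - P (X' L)) L ∧
            HasDerivAt X' (s * X' L * γ₁' L) L) ∧ X' 0 = xstar ∧ γ₁' 0 = 0) →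
        X' = X ∧ γ₁' = γ₁) ∧
      (∀ L : ℝ, 0 < X L) ∧
      Filter.Tendsto (fun L => (X L, γ₁ L)) Filter.atBot (nhds (0, 0)) ∧
      Filter.Tendsto (fun L => (X L, γ₁ L)) Filter.atTop (nhds (0, -1)) := by
  have hPL : LocallyLipschitzOn (Ioi 0) P :=
    ((hP1.1.mono Ioi_subset_Ici_self).of_le one_le_two).locallyLipschitzOn (convex_Ioi 0)
  exact stmt_18_general s hs P hP1.1.continuousOn hPL hP1.2.1 hP1.2.2 xstar hxstar
end
end
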